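/- Let J be a totally disconnected, locally compact, Hausdorff topological group containing the Heisenberg group H(W) of a symplectic F-space W as a closed normal subgroup. For any two smooth oscillator representations ω and ω' of J (associated to the fixed character ψ), there exists a unique character χ of J which is trivial on H(W) such that ω' ≅ χ⊗ω. -/

import Mathlib

/-!
Statement 2 (Lemma `uniqueo` of Sun–Zhu, "Conservation relations for local
theta correspondence").

`F` is a non-archimedean local field of characteristic zero (axiomatized as a
non-discrete, totally disconnected, locally compact Hausdorff topological field
of characteristic zero), with a fixed nontrivial unitary character
`ψ : F → ℂˣ`.  `W` is a finite-dimensional symplectic `F`-space, and `H(W)` is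
its Heisenberg group, realized concretely below as `Heisenberg B` for the
symplectic form `B`.  `J` is a totally disconnected, locally compact, Hausdorff
topological group containing `H(W)` as a closed normal subgroup (via the
injective continuous homomorphism `ι` with closed normal range).

Claim: for any two smooth oscillator representations `ω`, `ω'` of `J`
(associated to `ψ`), there exists a unique character `χ` of `J` which is
trivial on `H(W)` such that `ω' ≅ χ ⊗ ω`.
-/

section Heisenberg

variable {F : Type} [Field F] {Wsp : Type} [AddCommGroup Wsp] [Module F Wsp]

/-- The Heisenberg group `H(W)` attached to a symplectic `F`-vector space `(Wsp, B)`: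
as a set it is `Wsp × F`, with multiplication
`(w,t)(w',t') = (w + w', t + t' + B w w')`. -/
@[ext]
structure Heisenberg (B : Wsp →ₗ[F] Wsp →ₗ[F] F) : Type where
  w : Wsp
  t : F

namespace Heisenberg

variable {B : Wsp →ₗ[F] Wsp →ₗ[F] F}

instance : Group (Heisenberg B) where
  mul x y := ⟨x.w + y.w, x.t + y.t + B x.w y.w⟩
  one := ⟨0, 0⟩
  inv x := ⟨-x.w, -x.t + B x.w x.w⟩
  mul_assoc x y z := by
    ext
    · exact add_assoc _ _ _
    · show x.t + y.t + B x.w y.w + z.t + B (x.w + y.w) z.w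
        = x.t + (y.t + z.t + B y.w z.w) + B x.w (y.w + z.w)
      simp only [map_add, LinearMap.add_apply]
      ring
  one_mul x := by
    ext
    · exact zero_add _
    · show 0 + x.t + B 0 x.w = x.t
      simp
  mul_one x := by
    ext
    · exact add_zero _
    · show x.t + 0 + B x.w 0 = x.t
      simp
  inv_mul_cancel x := by
    ext
    · exact neg_add_cancel _
    · show -x.t + B x.w x.w + x.t + B (-x.w) x.w = 0
      simp only [map_neg, LinearMap.neg_apply]
      ring

/-- The topology on the Heisenberg group, induced from `Wsp × F`. -/
instance [TopologicalSpace F] [TopologicalSpace Wsp] :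
    TopologicalSpace (Heisenberg B) :=
  TopologicalSpace.induced (fun x => (x.w, x.t)) inferInstance

end Heisenberg

end Heisenberg

/-- A representation of a topological group is *smooth* if every vector has an
open stabilizer. -/
def IsSmoothRep {G : Type} [Group G] [TopologicalSpace G] {V : Type}
    [AddCommGroup V] [Module ℂ V] (ρ : Representation ℂ G V) : Prop :=
  ∀ v : V, IsOpen {g : G | ρ g v = v}

/-- A *smooth oscillator representation* (associated to the additive character `ψ`)
of a topological group `J` containing the Heisenberg group `H(W)` (embedded via
`ι`): a smooth representation of `J` whose restriction to `H(W)` is irreducible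
with central character `ψ` (the center of `H(W)` being `{(0, z) : z ∈ F}`). -/
def IsSmoothOscillatorRep {F : Type} [Field F] {Wsp : Type} [AddCommGroup Wsp]
    [Module F Wsp] {B : Wsp →ₗ[F] Wsp →ₗ[F] F}
    {J : Type} [Group J] [TopologicalSpace J]
    {V : Type} [AddCommGroup V] [Module ℂ V]
    (ι : Heisenberg B →* J) (ψ : AddChar F ℂ) (ρ : Representation ℂ J V) : Prop :=
  IsSmoothRep ρ ∧
  (∃ v : V, v ≠ 0) ∧
  (∀ p : Submodule ℂ V,
      (∀ (h : Heisenberg B) (v : V), v ∈ p → ρ (ι h) v ∈ p) → p = ⊥ ∨ p = ⊤) ∧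
  (∀ (z : F) (v : V), ρ (ι ⟨0, z⟩) v = ψ z • v)

/-!
By smoothness a nonzero vector `v` is fixed by a small lattice `L` in `W`, so the preimage `K` of
`L` in `H(W)` acts on `v` through a character `χ`. Let `L*` be the dual of `L` under the pairing
`ψ [x, y]`; it contains `L` with finite index. Elements of `H(W)` above `L*` preserve the
`χ`-eigenspace of `K`, all others move it to different eigenspaces, so by irreducibility this
eigenspace is spanned by the translates of `v` under `L* / L`. It is finite-dimensional, whence
Schur's lemma. As `L** = L`, averaging a suitable matrix coefficient of `v` over `L* / L` gives `χ`
extended by zero to `H(W)`. This function does not depend on the representation and lies in the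
isotypic component of the right regular representation attached to each representation of this kind:
this is the Stone–von Neumann theorem.

An isomorphism `e` between the restrictions of `ω` and `ω'` to the normal subgroup `H(W)` makes
`ω g⁻¹` composed with the transport of `ω' g` through `e` an intertwiner, hence a scalar `χ g`.
Smoothness makes `χ` trivial near `1`, and Schur's lemma makes it unique.
-/

open Filter Topology
open scoped Pointwise

section LocallyCompact

theorem isOpen_setOf_forall_mem {X Y Z : Type*} [TopologicalSpace X] [TopologicalSpace Y]
    [TopologicalSpace Z] {f : X × Y → Z} (hf : Continuous f) {C : Set Y} (hC : IsCompact C)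
    {D : Set Z} (hD : IsOpen D) : IsOpen {x | ∀ y ∈ C, f (x, y) ∈ D} :=
  isOpen_iff_mem_nhds.2 fun _ hx ↦ hC.eventually_forall_of_forall_eventually fun y hy ↦
    hf.continuousAt.preimage_mem_nhds (hD.mem_nhds (hx y hy))

-- The stabilizer of a compact open neighbourhood of `0` under translation.
theorem exists_isOpen_isCompact_addSubgroup (G : Type*) [AddGroup G] [TopologicalSpace G]
    [IsTopologicalAddGroup G] [LocallyCompactSpace G] [TotallyDisconnectedSpace G] [T2Space G] :
    ∃ O : AddSubgroup G, IsOpen (O : Set G) ∧ IsCompact (O : Set G) := by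
  obtain ⟨K, hK, hK0⟩ := exists_compact_mem_nhds (0 : G)
  obtain ⟨C, hC : IsClopen C, h0C, hCK⟩ :=
    (loc_compact_Haus_tot_disc_of_zero_dim (H := G)).mem_nhds_iff.1 hK0
  have hCc : IsCompact C := hK.of_isClosed_subset hC.1 hCK
  let N : Set G := {x | ∀ c ∈ C, x + c ∈ C}
  have hN : N ∈ 𝓝 0 := (isOpen_setOf_forall_mem continuous_add hCc hC.2).mem_nhds (by simp)
  have hO : IsOpen (AddAction.stabilizer G C : Set G) := by
    refine AddSubgroup.isOpen_of_mem_nhds (g := 0) _ ?_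
    filter_upwards [hN, continuous_neg.continuousAt.preimage_mem_nhds (by rwa [neg_zero])]
      with x hx hx'
    refine AddAction.mem_stabilizer_set.2 fun b ↦ ⟨fun hb ↦ ?_, hx b⟩
    simpa using hx' _ hb
  refine ⟨_, hO, hCc.of_isClosed_subset (AddSubgroup.isClosed_of_isOpen _ hO) fun x hx ↦ ?_⟩
  simpa using (AddAction.mem_stabilizer_set.1 hx 0).2 h0C

variable {F : Type*} [Field F] [TopologicalSpace F] [IsTopologicalRing F]

theorem exists_ne_zero_of_mem_nhds (hF : ¬ DiscreteTopology F) {U : Set F} (hU : U ∈ 𝓝 0) :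
    ∃ x ∈ U, x ≠ 0 := by
  by_contra! h
  refine hF (discreteTopology_of_isOpen_singleton_zero ?_)
  rw [isOpen_singleton_iff_nhds_eq_pure]
  exact le_antisymm (le_pure_iff.2 (mem_of_superset hU h)) (pure_le_nhds _)

theorem exists_smul_subset_of_isCompact {W : Type*} [AddCommGroup W] [Module F W]
    [TopologicalSpace W] [ContinuousSMul F W] (hF : ¬ DiscreteTopology F) {C U : Set W}
    (hC : IsCompact C) (hU : U ∈ 𝓝 0) : ∃ s : F, s ≠ 0 ∧ s • C ⊆ U := by
  obtain ⟨s, hs, hs0⟩ := exists_ne_zero_of_mem_nhds hF <|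
    (isOpen_setOf_forall_mem (continuous_smul (M := F)) hC isOpen_interior).mem_nhds
      (x := 0) (by simpa using fun _ _ ↦ mem_interior_iff_mem_nhds.2 hU)
  exact ⟨s, hs0, Set.smul_set_subset_iff.2 fun c hc ↦ interior_subset (hs c hc)⟩

-- The multiplier ring of a compact open additive subgroup.
theorem exists_isOpen_isCompact_subring [LocallyCompactSpace F] [TotallyDisconnectedSpace F]
    [T2Space F] (hF : ¬ DiscreteTopology F) :
    ∃ R : Subring F, IsOpen (R : Set F) ∧ IsCompact (R : Set F) := by
  obtain ⟨O, hO, hOc⟩ := exists_isOpen_isCompact_addSubgroup F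
  let R : Subring F :=
    { carrier := {x | ∀ o ∈ O, x * o ∈ O}
      zero_mem' := by simp
      one_mem' := by simp
      add_mem' := fun hx hy o ho ↦ by rw [add_mul]; exact O.add_mem (hx o ho) (hy o ho)
      neg_mem' := fun hx o ho ↦ by rw [neg_mul]; exact O.neg_mem (hx o ho)
      mul_mem' := fun hx hy o ho ↦ by rw [mul_assoc]; exact hx _ (hy o ho) }
  have hR : IsOpen (R : Set F) := isOpen_setOf_forall_mem continuous_mul hOc hO
  obtain ⟨o, ho, ho0⟩ := exists_ne_zero_of_mem_nhds hF (hO.mem_nhds O.zero_mem)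
  refine ⟨R, hR, ((hOc.image (continuous_mul_const o⁻¹)).of_isClosed_subset
    (R.toAddSubgroup.isClosed_of_isOpen hR) fun x hx ↦ ⟨x * o, hx o ho, ?_⟩)⟩
  exact mul_inv_cancel_right₀ ho0 x

variable {R : Subring F} {a : F}

theorem exists_mem_inv_notMem_of_isCompact [T1Space F] (hF : ¬ DiscreteTopology F)
    (hR : IsOpen (R : Set F)) (hRc : IsCompact (R : Set F)) : ∃ a ∈ R, a ≠ 0 ∧ a⁻¹ ∉ R := by
  obtain ⟨a, ⟨haR, ha⟩, ha0⟩ := exists_ne_zero_of_mem_nhds hF <| inter_mem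
    (hR.mem_nhds R.zero_mem) <|
    (isOpen_setOf_forall_mem continuous_mul hRc (isOpen_compl_singleton (x := (1 : F)))).mem_nhds
      (x := 0) (by simp)
  exact ⟨a, haR, ha0, fun h ↦ ha _ h (mul_inv_cancel₀ ha0)⟩

-- By Ellis–Numakura the closure of the powers of `a` contains an idempotent; it lies in `a • R`, so
-- it is `0` and not `1`.
theorem isTopologicallyNilpotent_of_inv_notMem [T2Space F] (hRc : IsCompact (R : Set F))
    (ha : a ∈ R) (ha' : a⁻¹ ∉ R) : IsTopologicallyNilpotent a := by
  let T : Set F := closure (Set.range fun n : ℕ ↦ a ^ (n + 1))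
  have haR : IsCompact (a • (R : Set F)) := hRc.smul a
  have hT : T ⊆ a • (R : Set F) := by
    refine closure_minimal ?_ haR.isClosed
    rintro _ ⟨n, rfl⟩
    exact ⟨a ^ n, R.pow_mem ha n, (pow_succ' a n).symm⟩
  have hmul : ∀ᵉ (x ∈ T) (y ∈ T), x * y ∈ T := fun x hx y hy ↦
    map_mem_closure₂ continuous_mul hx hy <| by
      rintro _ ⟨m, rfl⟩ _ ⟨n, rfl⟩
      exact ⟨m + 1 + n, by ring⟩
  have h0 : 0 ∈ T := by
    obtain ⟨e, he, hee⟩ := exists_idempotent_in_compact_subsemigroup continuous_mul_const T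
      (Set.range_nonempty _).closure (haR.of_isClosed_subset isClosed_closure hT) hmul
    rcases IsIdempotentElem.iff_eq_zero_or_one.1 hee with rfl | rfl
    · exact he
    · obtain ⟨r, hr, har : a * r = 1⟩ := hT he
      exact absurd (eq_inv_of_mul_eq_one_right har ▸ hr) ha'
  refine tendsto_def.2 fun U hU ↦ ?_
  obtain ⟨_, hk, k, rfl⟩ := mem_closure_iff_nhds.1 h0 _ <|
    (isOpen_setOf_forall_mem continuous_mul hRc isOpen_interior).mem_nhds
      (x := 0) (by simpa using fun _ _ ↦ mem_interior_iff_mem_nhds.2 hU)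
  filter_upwards [eventually_ge_atTop (k + 1)] with n hn
  rw [Set.mem_preimage, ← Nat.add_sub_of_le hn, pow_add]
  exact interior_subset (hk _ (R.pow_mem ha _))

theorem exists_pow_mul_mem_of_isTopologicallyNilpotent (ha : IsTopologicallyNilpotent a) {U : Set F}
    (hU : U ∈ 𝓝 0) (x : F) : ∃ n, a ^ n * x ∈ U :=
  (Tendsto.eventually_mem (by simpa using Tendsto.mul_const x ha) hU).exists

-- Otherwise the nested compact sets `{y ∈ R | a⁻¹ * y ∉ R ∧ (a ^ m)⁻¹ * y ∈ M}` have a common point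
-- `y ≠ 0`, and `M` contains the whole line through `y`.
theorem exists_le_inv_pow_smul_of_isClosed (hR : IsOpen (R : Set F)) (hRc : IsCompact (R : Set F))
    (ha : a ∈ R) (ha0 : a ≠ 0) (hnil : IsTopologicallyNilpotent a) {M : Submodule R F}
    (hM : IsClosed (M : Set F)) (hne : M ≠ ⊤) : ∃ m : ℕ, ∀ x ∈ M, a ^ m * x ∈ R := by
  have hR0 : (R : Set F) ∈ 𝓝 0 := hR.mem_nhds R.zero_mem
  have hRcl : IsClosed (R : Set F) := R.toAddSubgroup.isClosed_of_isOpen hR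
  let T (m : ℕ) : Set F := ((R : Set F) \ (a⁻¹ * ·) ⁻¹' R) ∩ ((a ^ m)⁻¹ * ·) ⁻¹' M
  have hTcl (m : ℕ) : IsClosed (T m) :=
    (hRcl.sdiff (hR.preimage (continuous_const_mul _))).inter (hM.preimage (continuous_const_mul _))
  have hT (m : ℕ) : T (m + 1) ⊆ T m := fun y hy ↦ ⟨hy.1, by
    have h : a * ((a ^ (m + 1))⁻¹ * y) ∈ M := M.smul_mem (⟨a, ha⟩ : R) hy.2
    rwa [pow_succ', mul_inv, mul_assoc, mul_inv_cancel_left₀ ha0] at h⟩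
  obtain ⟨m, hm⟩ : ∃ m, T m = ∅ := by
    by_contra! h
    obtain ⟨y, hy⟩ := IsCompact.nonempty_iInter_of_sequence_nonempty_isCompact_isClosed T hT h
      (hRc.of_isClosed_subset (hTcl 0) fun _ hy ↦ hy.1.1) hTcl
    rw [Set.mem_iInter] at hy
    have hy0 : y ≠ 0 := by
      rintro rfl
      exact (hy 0).1.2 (by simp)
    refine hne (M.eq_top_iff'.2 fun z ↦ ?_)
    obtain ⟨n, hn⟩ := exists_pow_mul_mem_of_isTopologicallyNilpotent hnil hR0 (z * y⁻¹)
    have h : a ^ n * (z * y⁻¹) * ((a ^ n)⁻¹ * y) ∈ M := M.smul_mem (⟨_, hn⟩ : R) (hy n).2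
    rwa [show a ^ n * (z * y⁻¹) * ((a ^ n)⁻¹ * y) = z by field_simp] at h
  refine ⟨m, fun x hx ↦ ?_⟩
  have hdesc (k : ℕ) (hk : a ^ (m + k) * x ∈ R) : a ^ m * x ∈ R := by
    induction k with
    | zero => exact hk
    | succ k ih =>
      refine ih (by_contra fun hk' ↦ hm.subset (⟨⟨hk, ?_⟩, ?_⟩ : a ^ (m + k + 1) * x ∈ T m))
      · rwa [Set.mem_preimage, pow_succ', mul_assoc, inv_mul_cancel_left₀ ha0]
      · rw [Set.mem_preimage, add_assoc, pow_add, mul_assoc,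
          inv_mul_cancel_left₀ (pow_ne_zero m ha0)]
        exact M.smul_mem (⟨_, R.pow_mem ha (k + 1)⟩ : R) hx
  obtain ⟨n, hn⟩ := exists_pow_mul_mem_of_isTopologicallyNilpotent hnil hR0 x
  refine hdesc n ?_
  rw [pow_add, mul_assoc]
  exact R.mul_mem (R.pow_mem ha m) hn

theorem isClosed_setOf_addChar_eq_one {A : Type*} [CommMonoid A] {ψ : AddChar F A}
    (hψ : IsOpen {x | ψ x = 1}) : IsClosed {x | ψ x = 1} :=
  ψ.toAddMonoidHom.ker.isClosed_of_isOpen hψ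

theorem exists_isCompact_forall_mul_eq_one [LocallyCompactSpace F] [TotallyDisconnectedSpace F]
    [T2Space F] (hF : ¬ DiscreteTopology F) {A : Type*} [CommMonoid A] {ψ : AddChar F A}
    (hψ : IsOpen {x | ψ x = 1}) (hψ1 : ψ ≠ 1) {U : Set F} (hU : U ∈ 𝓝 0) :
    ∃ C : Set F, IsCompact C ∧ ∀ x, (∀ u ∈ U, ψ (x * u) = 1) → x ∈ C := by
  obtain ⟨R, hR, hRc⟩ := exists_isOpen_isCompact_subring hF
  obtain ⟨a, ha, ha0, ha'⟩ := exists_mem_inv_notMem_of_isCompact hF hR hRc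
  obtain ⟨s, hs0, hs⟩ := exists_smul_subset_of_isCompact hF hRc hU
  let M : Submodule R F :=
    { carrier := {x | ∀ r ∈ R, ψ (x * (s * r)) = 1}
      zero_mem' := by simp
      add_mem' := fun hx hy r hr ↦ by
        rw [add_mul, AddChar.map_add_eq_mul, hx r hr, hy r hr, one_mul]
      smul_mem' := fun c x hx r hr ↦ by
        convert hx _ (R.mul_mem c.2 hr) using 2
        rw [Subring.smul_def, smul_eq_mul]
        ring }
  have hM : IsClosed (M : Set F) := by
    have : (M : Set F) = ⋂ r ∈ R, {x | ψ (x * (s * r)) = 1} := by ext; simp [M]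
    rw [this]
    exact isClosed_biInter fun r _ ↦
      (isClosed_setOf_addChar_eq_one hψ).preimage (continuous_mul_const (s * r))
  have hne : M ≠ ⊤ := by
    obtain ⟨z, hz⟩ := (AddChar.ne_one_iff).1 hψ1
    intro h
    have : z * s⁻¹ ∈ M := h ▸ trivial
    exact hz (by simpa [hs0] using this 1 R.one_mem)
  obtain ⟨m, hm⟩ := exists_le_inv_pow_smul_of_isClosed hR hRc ha ha0
    (isTopologicallyNilpotent_of_inv_notMem hRc ha ha') hM hne
  refine ⟨_, hRc.image (continuous_const_mul (a ^ m)⁻¹), fun x hx ↦ ⟨a ^ m * x, hm x ?_, ?_⟩⟩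
  · exact fun r hr ↦ hx _ (hs (Set.smul_mem_smul_set hr))
  · exact inv_mul_cancel_left₀ (pow_ne_zero m ha0) x

end LocallyCompact

section DualLattice

variable {F A W : Type*} [Field F] [CommMonoid A] [AddCommGroup W] [Module F W]

/-- The annihilator of `S` under the `A`-valued pairing `(l, w) ↦ ψ (β l w)`; when `S` is a lattice
this is its dual lattice with respect to `ψ`. -/
def charDual (ψ : AddChar F A) (β : W →ₗ[F] W →ₗ[F] F) (S : Set W) : AddSubgroup W where
  carrier := {w | ∀ l ∈ S, ψ (β l w) = 1}
  zero_mem' := by simp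
  add_mem' := fun hx hy l hl ↦ by rw [map_add, AddChar.map_add_eq_mul, hx l hl, hy l hl, one_mul]
  neg_mem' := fun {x} hx l hl ↦ by
    have h := ψ.map_add_eq_mul (β l x) (β l (-x))
    rwa [hx l hl, one_mul, ← map_add, add_neg_cancel, map_zero, AddChar.map_zero_eq_one, eq_comm]
      at h

variable {ψ : AddChar F A} {β : W →ₗ[F] W →ₗ[F] F} {S T : Set W}

theorem mem_charDual {w : W} : w ∈ charDual ψ β S ↔ ∀ l ∈ S, ψ (β l w) = 1 :=
  Iff.rfl

theorem charDual_anti (h : S ⊆ T) : charDual ψ β T ≤ charDual ψ β S :=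
  fun _ hw l hl ↦ hw l (h hl)

theorem smul_mem_charDual {s : F} {w : W} : s • w ∈ charDual ψ β S ↔ w ∈ charDual ψ β (s • S) := by
  simp [mem_charDual, ← Set.image_smul]

theorem charDual_charDual_charDual (hβ : ∀ x y, ψ (β x y) = 1 → ψ (β y x) = 1) :
    charDual ψ β (charDual ψ β (charDual ψ β S)) = charDual ψ β S := by
  have hle (S : Set W) : S ⊆ charDual ψ β (charDual ψ β S) := fun l hl w hw ↦ hβ _ _ (hw l hl)
  exact le_antisymm (charDual_anti (hle S)) (hle _)

variable [TopologicalSpace F] [IsTopologicalRing F] [TopologicalSpace W] [IsModuleTopology F W]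

theorem isClosed_charDual (hψ : IsOpen {x | ψ x = 1}) : IsClosed (charDual ψ β S : Set W) := by
  have : (charDual ψ β S : Set W) = ⋂ l ∈ S, {w | ψ (β l w) = 1} := by ext; simp [mem_charDual]
  rw [this]
  exact isClosed_biInter fun l _ ↦
    (isClosed_setOf_addChar_eq_one hψ).preimage (IsModuleTopology.continuous_of_linearMap (β l))

variable [FiniteDimensional F W]

theorem isOpen_charDual (hψ : IsOpen {x | ψ x = 1}) (hS : IsCompact S) :
    IsOpen (charDual ψ β S : Set W) :=
  isOpen_setOf_forall_mem (f := fun p : W × W ↦ β p.2 p.1)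
    ((IsModuleTopology.continuous_bilinear_of_finite_left β).comp continuous_swap) hS hψ

variable (F W) in
theorem locallyCompactSpace_of_isModuleTopology [LocallyCompactSpace F] :
    LocallyCompactSpace W := by
  have := IsModuleTopology.toContinuousAdd F W
  let e := (Module.finBasis F W).equivFun
  let h : W ≃ₜ (Fin (Module.finrank F W) → F) :=
    { e with
      continuous_toFun := IsModuleTopology.continuous_of_linearMap e.toLinearMap
      continuous_invFun := IsModuleTopology.continuous_of_linearMap e.symm.toLinearMap }
  exact h.isClosedEmbedding.locallyCompactSpace

variable [LocallyCompactSpace F] [TotallyDisconnectedSpace F] [T2Space F]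

theorem isCompact_charDual (hF : ¬ DiscreteTopology F) (hψ : IsOpen {x | ψ x = 1}) (hψ1 : ψ ≠ 1)
    (hβ : β.SeparatingRight) (hS : S ∈ 𝓝 0) : IsCompact (charDual ψ β S : Set W) := by
  have := IsModuleTopology.toContinuousAdd F W
  let b := Module.finBasis F W
  have hU (i) : {t : F | t • b i ∈ S} ∈ 𝓝 0 :=
    (continuous_id.smul continuous_const).continuousAt.preimage_mem_nhds (by simpa using hS)
  choose C hC hsub using fun i ↦ exists_isCompact_forall_mul_eq_one hF hψ hψ1 (hU i)
  let Φ : W →ₗ[F] Fin (Module.finrank F W) → F := LinearMap.pi fun i ↦ β (b i)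
  have hΦ : Function.Injective Φ := (injective_iff_map_eq_zero Φ).2 fun w hw ↦ hβ w fun x ↦ by
    have : β.flip w = 0 := b.ext fun i ↦ congr_fun hw i
    exact LinearMap.congr_fun this x
  let e : W ≃ₗ[F] Fin (Module.finrank F W) → F := Φ.linearEquivOfInjective hΦ (by simp)
  have he : Continuous e.symm := IsModuleTopology.continuous_of_linearMap e.symm.toLinearMap
  refine ((isCompact_univ_pi hC).image he).of_isClosed_subset (isClosed_charDual hψ) fun w hw ↦
    ⟨e w, fun i _ ↦ hsub i _ fun u hu ↦ ?_, e.symm_apply_apply w⟩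
  simpa [mul_comm, e, Φ] using hw _ hu

theorem exists_charDual_lattice_of_isModuleTopology (hF : ¬ DiscreteTopology F)
    (hψ : IsOpen {x | ψ x = 1}) (hψ1 : ψ ≠ 1) (hβ : β.SeparatingRight)
    (hβ' : ∀ x y, ψ (β x y) = 1 → ψ (β y x) = 1) {U : Set W} (hU : U ∈ 𝓝 0) :
    ∃ L : AddSubgroup W, (L : Set W) ⊆ U ∧ charDual ψ β (charDual ψ β L) = L ∧
      L.relIndex (charDual ψ β L) ≠ 0 := by
  have := IsModuleTopology.topologicalAddGroup F W
  have := locallyCompactSpace_of_isModuleTopology F W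
  obtain ⟨K, hK, hK0⟩ := exists_compact_mem_nhds (0 : W)
  obtain ⟨s, hs0, hs⟩ := exists_smul_subset_of_isCompact hF (isCompact_charDual hF hψ hψ1 hβ hK0) hU
  let L := charDual ψ β (s⁻¹ • K)
  have hLU : (L : Set W) ⊆ U := fun w hw ↦ hs
    ⟨s⁻¹ • w, smul_mem_charDual.2 hw, smul_inv_smul₀ hs0 w⟩
  have hLo : IsOpen (L : Set W) := isOpen_charDual hψ (hK.smul s⁻¹)
  refine ⟨L, hLU, charDual_charDual_charDual hβ', ?_⟩
  have := isCompact_iff_compactSpace.1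
    (isCompact_charDual hF hψ hψ1 hβ (hLo.mem_nhds L.zero_mem))
  have := AddSubgroup.quotient_finite_of_isOpen (L.addSubgroupOf (charDual ψ β L))
    (hLo.preimage continuous_subtype_val)
  exact AddSubgroup.index_ne_zero_of_finite

-- The module topology is the finest one compatible with the vector space structure.
omit [IsModuleTopology F W] in
theorem exists_charDual_lattice [ContinuousAdd W] [ContinuousSMul F W] (hF : ¬ DiscreteTopology F)
    (hψ : IsOpen {x | ψ x = 1}) (hψ1 : ψ ≠ 1) (hβ : β.SeparatingRight)
    (hβ' : ∀ x y, ψ (β x y) = 1 → ψ (β y x) = 1) {U : Set W} (hU : U ∈ 𝓝 0) :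
    ∃ L : AddSubgroup W, (L : Set W) ⊆ U ∧ charDual ψ β (charDual ψ β L) = L ∧
      L.relIndex (charDual ψ β L) ≠ 0 := by
  have hU' := nhds_mono (moduleTopology_le F W) hU
  let := moduleTopology F W
  have : IsModuleTopology F W := ⟨rfl⟩
  exact exists_charDual_lattice_of_isModuleTopology hF hψ hψ1 hβ hβ' hU'

end DualLattice

section MatrixCoefficients

open Module Representation TannakaDuality.FiniteGroup
open scoped MonoidAlgebra

theorem nonempty_linearEquiv_of_mem_isotypicComponent {R M S T : Type*} [Ring R]
    [AddCommGroup M] [Module R M] [AddCommGroup S] [Module R S] [AddCommGroup T] [Module R T]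
    [IsSimpleModule R S] [IsSimpleModule R T] {x : M} (hx : x ≠ 0)
    (hS : x ∈ isotypicComponent R M S) (hT : x ∈ isotypicComponent R M T) :
    Nonempty (S ≃ₗ[R] T) := by
  have hle : R ∙ x ≤ isotypicComponent R M S := (Submodule.span_singleton_le_iff_mem ..).2 hS
  have hle' : R ∙ x ≤ isotypicComponent R M T := (Submodule.span_singleton_le_iff_mem ..).2 hT
  have : IsSemisimpleModule R (R ∙ x) :=
    .of_injective (Submodule.inclusion hle) (Submodule.inclusion_injective hle)
  have : Nontrivial (R ∙ x) := Submodule.nontrivial_span_singleton hx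
  obtain ⟨m, hm⟩ := IsSemisimpleModule.exists_simple_submodule R (R ∙ x)
  obtain ⟨e⟩ := (IsIsotypicOfType.isotypicComponent R M S).of_injective _
    (Submodule.inclusion_injective hle) m
  obtain ⟨e'⟩ := (IsIsotypicOfType.isotypicComponent R M T).of_injective _
    (Submodule.inclusion_injective hle') m
  exact ⟨e.symm.trans e'⟩

universe u

variable {k G : Type u} {V V' : Type*} [Field k] [Group G] [AddCommGroup V] [Module k V]
  [AddCommGroup V'] [Module k V'] {ρ : Representation k G V} {σ : Representation k G V'}

theorem nonempty_equiv_of_nonempty_linearEquiv (h : Nonempty (ρ.asModule ≃ₗ[k[G]] σ.asModule)) :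
    Nonempty (ρ.Equiv σ) := by
  obtain ⟨e⟩ := h
  exact ⟨IntertwiningMap.ofBijective ((IntertwiningMap.equivLinearMapAsModule ρ σ).symm e)
    e.bijective⟩

/-- The matrix coefficients `g ↦ l (ρ g v)` attached to a fixed functional `l`. -/
def matrixCoeff (ρ : Representation k G V) (l : Dual k V) :
    IntertwiningMap ρ (rightRegular (k := k) (G := G)) where
  toFun v g := l (ρ g v)
  map_add' _ _ := by ext; simp
  map_smul' _ _ := by ext; simp
  isIntertwining' _ := by ext; simp

theorem matrixCoeff_mem_isotypicComponent [IsIrreducible ρ] (l : Dual k V) (v : V) :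
    (rightRegular (k := k) (G := G)).asModuleEquiv.symm (matrixCoeff ρ l v) ∈
      isotypicComponent k[G] (rightRegular (k := k) (G := G)).asModule ρ.asModule := by
  let f := IntertwiningMap.equivLinearMapAsModule _ _ (matrixCoeff ρ l)
  have htop : isotypicComponent k[G] ρ.asModule ρ.asModule = ⊤ :=
    top_le_iff.1 (le_sSup ⟨Submodule.topEquiv⟩)
  exact LinearMap.le_comap_isotypicComponent ρ.asModule f (htop ▸ Submodule.mem_top :
    ρ.asModuleEquiv.symm v ∈ _)

theorem nonempty_equiv_of_sum_matrixCoeff_eq [IsIrreducible ρ] [IsIrreducible σ] {ι : Type*}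
    (s : Finset ι) {l : ι → Dual k V} {v : ι → V} {l' : ι → Dual k V'} {v' : ι → V'}
    (heq : ∀ g, ∑ i ∈ s, l i (ρ g (v i)) = ∑ i ∈ s, l' i (σ g (v' i)))
    (hne : ∑ i ∈ s, l i (v i) ≠ 0) : Nonempty (ρ.Equiv σ) := by
  let e := (rightRegular (k := k) (G := G)).asModuleEquiv.symm
  have hsum : ∑ i ∈ s, matrixCoeff ρ (l i) (v i) = ∑ i ∈ s, matrixCoeff σ (l' i) (v' i) :=
    funext fun g ↦ by simpa using! heq g
  refine nonempty_equiv_of_nonempty_linearEquiv (nonempty_linearEquiv_of_mem_isotypicComponent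
    (x := e (∑ i ∈ s, matrixCoeff ρ (l i) (v i))) ?_ ?_ ?_)
  · refine e.map_ne_zero_iff.2 fun h ↦ hne ?_
    simpa [matrixCoeff] using congr_fun h 1
  · rw [map_sum]
    exact Submodule.sum_mem _ fun i _ ↦ matrixCoeff_mem_isotypicComponent (l i) (v i)
  · rw [hsum, map_sum]
    exact Submodule.sum_mem _ fun i _ ↦ matrixCoeff_mem_isotypicComponent (l' i) (v' i)

end MatrixCoefficients

section JointEigenspace

open Module Representation

variable {k G V : Type*} [Field k] [Group G] [AddCommGroup V] [Module k V]

/-- The operators of `ρ` commute up to the scalars prescribed by the bimultiplicative pairing `c`,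
as those of a Heisenberg group with a fixed central character do. -/
def CommutesUpTo (c : G →* G →* k) (ρ : Representation k G V) : Prop :=
  ∀ g h v, ρ g (ρ h v) = c g h • ρ h (ρ g v)

/-- The annihilator of `S` under the pairing `c`, as a subgroup of the second argument. -/
def pairingDual (c : G →* G →* k) (S : Set G) : Subgroup G :=
  ⨅ h ∈ S, (c h).ker

/-- The vectors on which the subgroup `K` acts through `χ`. Arbitrary functions `χ` are allowed so
that these spaces are indexed like the simultaneous eigenspaces of Mathlib. -/
def jointEigenspace (ρ : Representation k G V) (K : Subgroup G) (χ : K → k) : Submodule k V :=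
  ⨅ h : K, Module.End.eigenspace (ρ h) (χ h)

variable {c : G →* G →* k} {ρ : Representation k G V} {K : Subgroup G} {χ : K → k} {v : V}

theorem mem_pairingDual {S : Set G} {g : G} : g ∈ pairingDual c S ↔ ∀ h ∈ S, c h g = 1 := by
  simp [pairingDual, Subgroup.mem_iInf, MonoidHom.mem_ker]

theorem mem_jointEigenspace : v ∈ jointEigenspace ρ K χ ↔ ∀ h : K, ρ h v = χ h • v := by
  simp [jointEigenspace]

theorem CommutesUpTo.apply_mem_jointEigenspace (hc : CommutesUpTo c ρ)
    (hv : v ∈ jointEigenspace ρ K χ) (g : G) :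
    ρ g v ∈ jointEigenspace ρ K fun h ↦ c h g * χ h :=
  mem_jointEigenspace.2 fun h ↦ by rw [hc, mem_jointEigenspace.1 hv h, map_smul, smul_smul]

theorem ne_zero_of_mem_jointEigenspace (hv : v ∈ jointEigenspace ρ K χ) (hv0 : v ≠ 0) (h : K) :
    χ h ≠ 0 := by
  intro h0
  have := mem_jointEigenspace.1 hv h
  rw [h0, zero_smul] at this
  exact hv0 ((map_eq_zero_iff _ (ρ.apply_bijective h).injective).1 this)

theorem CommutesUpTo.le_pairingDual (hc : CommutesUpTo c ρ) (hv : v ∈ jointEigenspace ρ K χ)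
    (hv0 : v ≠ 0) : K ≤ pairingDual c K := by
  refine fun h hh ↦ mem_pairingDual.2 fun l hl ↦ ?_
  have hχ (h : K) : ρ h v = χ h • v := mem_jointEigenspace.1 hv h
  have hne : ρ h (ρ l v) ≠ 0 := by
    rwa [map_ne_zero_iff _ (ρ.apply_bijective h).injective,
      map_ne_zero_iff _ (ρ.apply_bijective l).injective]
  have hcomm : ρ l (ρ h v) = ρ h (ρ l v) := by
    rw [hχ ⟨h, hh⟩, map_smul, hχ ⟨l, hl⟩, map_smul, hχ ⟨h, hh⟩, smul_comm]
  exact smul_left_injective k hne ((hc l h v).symm.trans (hcomm.trans (one_smul k _).symm))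

theorem CommutesUpTo.apply_mem_jointEigenspace_of_mem (hc : CommutesUpTo c ρ)
    (hv : v ∈ jointEigenspace ρ K χ) {g : G} (hg : g ∈ pairingDual c K) :
    ρ g v ∈ jointEigenspace ρ K χ := by
  convert hc.apply_mem_jointEigenspace hv g with h
  rw [mem_pairingDual.1 hg h h.2, one_mul]

theorem CommutesUpTo.apply_mem_iSup_of_notMem (hc : CommutesUpTo c ρ)
    (hv : v ∈ jointEigenspace ρ K χ) (hv0 : v ≠ 0) {g : G} (hg : g ∉ pairingDual c K) :
    ρ g v ∈ ⨆ χ' ≠ χ, jointEigenspace ρ K χ' := by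
  obtain ⟨h, hh, hne⟩ : ∃ h ∈ K, c h g ≠ 1 := by simpa [mem_pairingDual] using hg
  refine Submodule.mem_iSup_of_mem _ (Submodule.mem_iSup_of_mem (fun heq ↦ hne ?_)
    (hc.apply_mem_jointEigenspace hv g))
  exact (mul_eq_right₀ (ne_zero_of_mem_jointEigenspace hv hv0 ⟨h, hh⟩)).1 (congr_fun heq ⟨h, hh⟩)

theorem CommutesUpTo.disjoint_iSup (hc : CommutesUpTo c ρ) (hK : K ≤ pairingDual c K) :
    Disjoint (jointEigenspace ρ K χ) (⨆ χ' ≠ χ, jointEigenspace ρ K χ') := by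
  have hcomm (h h' : K) : Commute (ρ h) (ρ h') := LinearMap.ext fun u ↦ by
    simpa [mem_pairingDual.1 (hK h'.2) h h.2] using hc h h' u
  have hind := Module.End.independent_iInf_maxGenEigenspace_of_forall_mapsTo (fun h : K ↦ ρ h)
    fun h h' μ ↦ Module.End.mapsTo_maxGenEigenspace_of_comm (hcomm h' h) μ
  exact (hind.mono fun χ ↦ iInf_mono fun h ↦ Module.End.eigenspace_le_maxGenEigenspace) χ

theorem span_range_apply_eq_top [IsIrreducible ρ] (hv : v ≠ 0) :
    Submodule.span k (Set.range (ρ · v)) = ⊤ := by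
  let p : Subrepresentation ρ := ⟨Submodule.span k (Set.range (ρ · v)), fun g u hu ↦ by
    refine (Submodule.map_span_le (ρ g) _ _).2 ?_ (Submodule.mem_map_of_mem hu)
    rintro _ ⟨h, rfl⟩
    exact Submodule.subset_span ⟨g * h, by simp⟩⟩
  have hvp : v ∈ p.toSubmodule := Submodule.subset_span ⟨1, by simp⟩
  rcases IsSimpleOrder.eq_bot_or_eq_top p with h | h
  · rw [h] at hvp
    exact absurd ((Submodule.mem_bot k).1 hvp) hv
  · exact congr_arg Subrepresentation.toSubmodule h

theorem CommutesUpTo.jointEigenspace_eq_span [IsIrreducible ρ] (hc : CommutesUpTo c ρ)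
    (hv : v ∈ jointEigenspace ρ K χ) (hv0 : v ≠ 0) :
    jointEigenspace ρ K χ = Submodule.span k ((ρ · v) '' pairingDual c K) := by
  have hle : Submodule.span k ((ρ · v) '' pairingDual c K) ≤ jointEigenspace ρ K χ := by
    rw [Submodule.span_le, Set.image_subset_iff]
    exact fun g hg ↦ hc.apply_mem_jointEigenspace_of_mem hv hg
  have hdisj := hc.disjoint_iSup (χ := χ) (hc.le_pairingDual hv hv0)
  refine (eq_of_le_of_inf_le_of_sup_le hle (hdisj.le_bot.trans bot_le) (le_top.trans ?_)).symm
  rw [← span_range_apply_eq_top (ρ := ρ) hv0, Submodule.span_le, Set.range_subset_iff]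
  intro g
  by_cases hg : g ∈ pairingDual c K
  · exact Submodule.mem_sup_left (Submodule.subset_span ⟨g, hg, rfl⟩)
  · exact Submodule.mem_sup_right (hc.apply_mem_iSup_of_notMem hv hv0 hg)

theorem CommutesUpTo.exists_dual_eq_one (hc : CommutesUpTo c ρ)
    (hv : v ∈ jointEigenspace ρ K χ) (hv0 : v ≠ 0) :
    ∃ l : Dual k V, l v = 1 ∧ ∀ g ∉ pairingDual c K, l (ρ g v) = 0 := by
  have hvC : v ∉ ⨆ χ' ≠ χ, jointEigenspace ρ K χ' := fun h ↦
    hv0 (Submodule.disjoint_def.1 (hc.disjoint_iSup (hc.le_pairingDual hv hv0)) v hv h)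
  obtain ⟨l, hl, hlC⟩ := Submodule.exists_le_ker_of_notMem hvC
  exact ⟨(l v)⁻¹ • l, by simp [hl], fun g hg ↦ by
    simp [LinearMap.mem_ker.1 (hlC (hc.apply_mem_iSup_of_notMem hv hv0 hg))]⟩

theorem CommutesUpTo.finiteDimensional_jointEigenspace [IsIrreducible ρ] (hc : CommutesUpTo c ρ)
    (hK : K.relIndex (pairingDual c K) ≠ 0) :
    FiniteDimensional k (jointEigenspace ρ K χ) := by
  rcases subsingleton_or_nontrivial (jointEigenspace ρ K χ) with _ | _
  · infer_instance
  obtain ⟨⟨v, hv⟩, hv0⟩ := exists_ne (0 : jointEigenspace ρ K χ)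
  have : (K.subgroupOf (pairingDual c K)).FiniteIndex := ⟨hK⟩
  let b (q : pairingDual c K ⧸ K.subgroupOf (pairingDual c K)) : V := ρ q.out v
  have hle : jointEigenspace ρ K χ ≤ Submodule.span k (Set.range b) := by
    have hv0 : v ≠ 0 := by simpa using hv0
    rw [hc.jointEigenspace_eq_span hv hv0, Submodule.span_le, Set.image_subset_iff]
    intro g hg
    obtain ⟨h, hh⟩ := QuotientGroup.mk_out_eq_mul (K.subgroupOf (pairingDual c K)) ⟨g, hg⟩
    have hb : b (⟨g, hg⟩ : pairingDual c K) = χ ⟨h, h.2⟩ • ρ g v := by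
      rw [← map_smul, ← mem_jointEigenspace.1 hv ⟨h, h.2⟩]
      simp [b, hh]
    refine (Submodule.smul_mem_iff _ (ne_zero_of_mem_jointEigenspace hv hv0 ⟨h, h.2⟩)).1 ?_
    exact hb ▸ Submodule.subset_span ⟨_, rfl⟩
  have := FiniteDimensional.span_of_finite k (Set.finite_range b)
  exact Submodule.finiteDimensional_of_le hle

-- An eigenvalue on the finite-dimensional subspace `E` yields a non-injective intertwiner.
theorem exists_forall_apply_eq_smul_of_mapsTo [IsAlgClosed k] [IsIrreducible ρ]
    (f : IntertwiningMap ρ ρ) {E : Submodule k V} [FiniteDimensional k E] [Nontrivial E]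
    (hE : ∀ v ∈ E, f v ∈ E) : ∃ a : k, ∀ v, f v = a • v := by
  obtain ⟨a, ha⟩ := Module.End.exists_eigenvalue (f.toLinearMap.restrict hE)
  obtain ⟨⟨u, hu⟩, hau, hu0⟩ := ha.exists_hasEigenvector
  rw [Module.End.mem_eigenspace_iff] at hau
  let d : IntertwiningMap ρ ρ := f - a • .id ρ
  have hdu : d u = 0 := by
    simpa [d, sub_eq_zero] using congr_arg Subtype.val hau
  have hd : d = 0 := (IsIrreducible.injective_or_eq_zero d).resolve_left fun h ↦
    hu0 (Subtype.ext (h (hdu.trans (map_zero d).symm)))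
  refine ⟨a, fun v ↦ sub_eq_zero.1 ?_⟩
  simpa using! DFunLike.congr_fun hd v

theorem CommutesUpTo.exists_forall_apply_eq_smul [IsAlgClosed k] [IsIrreducible ρ]
    (hc : CommutesUpTo c ρ) (hK : K.relIndex (pairingDual c K) ≠ 0)
    (hv : v ∈ jointEigenspace ρ K χ) (hv0 : v ≠ 0) (f : IntertwiningMap ρ ρ) :
    ∃ a : k, ∀ v, f v = a • v := by
  have := hc.finiteDimensional_jointEigenspace (χ := χ) hK
  have : Nontrivial (jointEigenspace ρ K χ) := ⟨⟨v, hv⟩, 0, by simpa using hv0⟩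
  refine exists_forall_apply_eq_smul_of_mapsTo f (E := jointEigenspace ρ K χ) fun u hu ↦ ?_
  refine mem_jointEigenspace.2 fun h ↦ ?_
  rw [← f.isIntertwining, mem_jointEigenspace.1 hu h, map_smul]

end JointEigenspace

section Uniqueness

open Module Representation

theorem sum_apply_out_eq_zero {P R : Type*} [Group P] [CommRing R] [IsDomain R] {N : Subgroup P}
    [Fintype (P ⧸ N)] {φ : P →* R} (hN : N ≤ φ.ker) (hφ : φ ≠ 1) : ∑ q : P ⧸ N, φ q.out = 0 := by
  obtain ⟨p, hp⟩ : ∃ p, φ p ≠ 1 := by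
    by_contra! h
    exact hφ (MonoidHom.ext h)
  have hout (g : P) : φ (g : P ⧸ N).out = φ g := by
    obtain ⟨h, hh⟩ := QuotientGroup.mk_out_eq_mul N g
    rw [hh, map_mul, hN h.2, mul_one]
  have hsmul (q : P ⧸ N) : φ (p • q).out = φ p * φ q.out := by
    rw [← map_mul, ← hout (p * q.out), ← smul_eq_mul, MulAction.Quotient.coe_smul_out]
  have hsum : φ p * ∑ q : P ⧸ N, φ q.out = ∑ q : P ⧸ N, φ q.out := by
    simp only [Finset.mul_sum, ← hsmul]
    exact Equiv.sum_comp (MulAction.toPerm p) fun q : P ⧸ N ↦ φ q.out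
  by_contra h
  exact hp ((mul_eq_right₀ h).1 hsum)

universe u

variable {k G : Type u} {V V' : Type*} [Field k] [Group G] [AddCommGroup V] [Module k V]
  [AddCommGroup V'] [Module k V'] {c : G →* G →* k} {ρ : Representation k G V}
  {σ : Representation k G V'} {K : Subgroup G} {χ : K → k} {v : V} {v' : V'}

theorem CommutesUpTo.sum_apply_conj [Fintype (pairingDual c K ⧸ K.subgroupOf (pairingDual c K))]
    (hc : CommutesUpTo c ρ) (hK : pairingDual c (pairingDual c K) = K)
    (hv : v ∈ jointEigenspace ρ K χ) {l : Dual k V} (hl : l v = 1)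
    (hl' : ∀ g ∉ pairingDual c K, l (ρ g v) = 0) (g : G) :
    ∑ q : pairingDual c K ⧸ K.subgroupOf (pairingDual c K),
      l (ρ (q.out : G) (ρ g (ρ (q.out : G)⁻¹ v))) =
      K.relIndex (pairingDual c K) * Function.extend ((↑) : K → G) χ 0 g := by
  have hconj (p : G) : l (ρ p (ρ g (ρ p⁻¹ v))) = c p g * l (ρ g v) := by
    rw [hc, map_smul, ρ.self_inv_apply, smul_eq_mul]
  simp only [hconj, ← Finset.sum_mul]
  by_cases hgK : g ∈ K
  · have hone : ∀ p ∈ pairingDual c K, c p g = 1 := mem_pairingDual.1 (hK.ge hgK)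
    have hχ : l (ρ g v) = χ ⟨g, hgK⟩ := by rw [mem_jointEigenspace.1 hv ⟨g, hgK⟩]; simp [hl]
    simp only [hone _ (SetLike.coe_mem _), hχ]
    rw [Subtype.val_injective.extend_apply χ 0 ⟨g, hgK⟩]
    simp [Subgroup.relIndex, Subgroup.index_eq_card]
  · rw [Function.extend_apply' _ _ _ (by simpa using hgK), Pi.zero_apply, mul_zero]
    by_cases hg : g ∈ pairingDual c K
    · obtain ⟨p, hp, hpg⟩ : ∃ p ∈ pairingDual c K, c p g ≠ 1 := by
        rw [← hK, mem_pairingDual] at hgK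
        push Not at hgK
        exact hgK
      refine mul_eq_zero_of_left (sum_apply_out_eq_zero
        (φ := (c.flip g).comp (pairingDual c K).subtype) ?_ ?_) _
      · exact fun h hh ↦ mem_pairingDual.1 hg h hh
      · exact fun h ↦ hpg (DFunLike.congr_fun h ⟨p, hp⟩)
    · rw [hl' g hg, mul_zero]

theorem CommutesUpTo.nonempty_equiv [IsIrreducible ρ] [IsIrreducible σ]
    (hρ : CommutesUpTo c ρ) (hσ : CommutesUpTo c σ)
    (hK : pairingDual c (pairingDual c K) = K) (hidx : (K.relIndex (pairingDual c K) : k) ≠ 0)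
    (hv : v ∈ jointEigenspace ρ K χ) (hv0 : v ≠ 0)
    (hv' : v' ∈ jointEigenspace σ K χ) (hv0' : v' ≠ 0) : Nonempty (ρ.Equiv σ) := by
  have : (K.subgroupOf (pairingDual c K)).FiniteIndex :=
    ⟨fun h ↦ hidx (by simp [Subgroup.relIndex, h])⟩
  have := Fintype.ofFinite (pairingDual c K ⧸ K.subgroupOf (pairingDual c K))
  obtain ⟨l, hl, hlP⟩ := hρ.exists_dual_eq_one hv hv0
  obtain ⟨l', hl', hlP'⟩ := hσ.exists_dual_eq_one hv' hv0'
  refine nonempty_equiv_of_sum_matrixCoeff_eq Finset.univ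
    (l := fun q : pairingDual c K ⧸ K.subgroupOf (pairingDual c K) ↦ l ∘ₗ ρ (q.out : G))
    (v := fun q ↦ ρ (q.out : G)⁻¹ v)
    (l' := fun q ↦ l' ∘ₗ σ (q.out : G)) (v' := fun q ↦ σ (q.out : G)⁻¹ v') (fun g ↦ ?_) ?_
  · exact (hρ.sum_apply_conj hK hv hl hlP g).trans (hσ.sum_apply_conj hK hv' hl' hlP' g).symm
  · simpa [hl, Subgroup.relIndex, Subgroup.index_eq_card] using hidx

end Uniqueness

namespace Heisenberg

section Representation

open Representation

variable {F Wsp : Type} [Field F] [AddCommGroup Wsp] [Module F Wsp] {B : Wsp →ₗ[F] Wsp →ₗ[F] F}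
  {k V : Type*} [Field k] [AddCommGroup V] [Module k V] {ψ : AddChar F k}
  {ρ : Representation k (Heisenberg B) V}

@[simp]
theorem one_w : (1 : Heisenberg B).w = 0 :=
  rfl

@[simp]
theorem mul_w (x y : Heisenberg B) : (x * y).w = x.w + y.w :=
  rfl

@[simp]
theorem mul_t (x y : Heisenberg B) : (x * y).t = x.t + y.t + B x.w y.w :=
  rfl

/-- The pairing `(x, y) ↦ ψ [x, y]`, where the commutator `[x, y]` lies in the center `F`. -/
def commutatorPairing (B : Wsp →ₗ[F] Wsp →ₗ[F] F) (ψ : AddChar F k) :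
    Heisenberg B →* Heisenberg B →* k where
  toFun x :=
    { toFun y := ψ ((B - B.flip) x.w y.w)
      map_one' := by simp
      map_mul' y z := by simp only [mul_w, map_add, AddChar.map_add_eq_mul] }
  map_one' := by ext; simp
  map_mul' x y := by
    ext z
    simp only [MonoidHom.coe_mk, OneHom.coe_mk, MonoidHom.mul_apply, mul_w, map_add,
      LinearMap.add_apply, AddChar.map_add_eq_mul]

theorem commutatorPairing_apply (x y : Heisenberg B) :
    commutatorPairing B ψ x y = ψ ((B - B.flip) x.w y.w) :=
  rfl

theorem commutesUpTo (hρ : ∀ z v, ρ ⟨0, z⟩ v = ψ z • v) :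
    CommutesUpTo (commutatorPairing B ψ) ρ := by
  intro x y v
  have hxy : x * y = ⟨0, (B - B.flip) x.w y.w⟩ * (y * x) := by
    ext
    · simp [add_comm]
    · simp
      ring
  rw [commutatorPairing_apply, ← hρ, ← Module.End.mul_apply, ← Module.End.mul_apply,
    ← Module.End.mul_apply, ← map_mul, ← map_mul, ← map_mul, hxy, mul_assoc]

/-- The preimage in `H(W)` of a subgroup of `W`. -/
def preimage (B : Wsp →ₗ[F] Wsp →ₗ[F] F) (L : AddSubgroup Wsp) : Subgroup (Heisenberg B) :=
  L.toSubgroup.comap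
    { toFun x := Multiplicative.ofAdd x.w
      map_one' := rfl
      map_mul' _ _ := rfl }

theorem mem_preimage {L : AddSubgroup Wsp} {x : Heisenberg B} : x ∈ preimage B L ↔ x.w ∈ L :=
  Iff.rfl

theorem pairingDual_preimage (L : AddSubgroup Wsp) :
    pairingDual (commutatorPairing B ψ) (preimage B L) =
      preimage B (charDual ψ (B - B.flip) L) := by
  ext x
  rw [mem_pairingDual, mem_preimage, mem_charDual]
  exact ⟨fun h l hl ↦ h ⟨l, 0⟩ hl, fun h y hy ↦ h _ hy⟩

theorem relIndex_preimage (L M : AddSubgroup Wsp) :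
    (preimage B L).relIndex (preimage B M) = L.relIndex M := by
  have hsurj : Function.Surjective fun x : Heisenberg B ↦ Multiplicative.ofAdd x.w :=
    fun w ↦ ⟨⟨w.toAdd, 0⟩, rfl⟩
  rw [preimage, preimage, Subgroup.relIndex_comap, Subgroup.map_comap_eq_self_of_surjective hsurj]
  rfl

theorem mem_jointEigenspace_preimage (hρ : ∀ z v, ρ ⟨0, z⟩ v = ψ z • v) {L : AddSubgroup Wsp}
    {v : V} (hv : ∀ l ∈ L, ρ ⟨l, 0⟩ v = v) :
    v ∈ jointEigenspace ρ (preimage B L) fun x ↦ ψ (x : Heisenberg B).t := by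
  refine mem_jointEigenspace.2 fun ⟨x, hx⟩ ↦ ?_
  have hmul : x = ⟨0, x.t⟩ * ⟨x.w, 0⟩ := by ext <;> simp
  calc
    ρ x v = ρ ⟨0, x.t⟩ (ρ ⟨x.w, 0⟩ v) := by rw [← Module.End.mul_apply, ← map_mul, ← hmul]
    _ = ψ x.t • v := by rw [show ρ ⟨x.w, 0⟩ v = v from hv x.w hx, hρ]

end Representation

end Heisenberg

namespace IsSmoothOscillatorRep

open Representation

variable {F Wsp : Type} [Field F] [AddCommGroup Wsp] [Module F Wsp]
  {B : Wsp →ₗ[F] Wsp →ₗ[F] F} {J : Type} [Group J] [TopologicalSpace J] {ι : Heisenberg B →* J}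
  {ψ : AddChar F ℂ} {V : Type} [AddCommGroup V] [Module ℂ V]

theorem isIrreducible {ω : Representation ℂ J V} (hω : IsSmoothOscillatorRep ι ψ ω) :
    IsIrreducible (ω.comp ι) := by
  obtain ⟨-, ⟨v, hv⟩, hirr, -⟩ := hω
  exact
    { exists_pair_ne := ⟨⊥, ⊤, fun h ↦ hv <| (Submodule.mem_bot ℂ).1 <|
        (congr_arg Subrepresentation.toSubmodule h).ge Submodule.mem_top⟩
      eq_bot_or_eq_top p := (hirr p.toSubmodule p.apply_mem_toSubmodule).imp
        (Subrepresentation.toSubmodule_injective ·) (Subrepresentation.toSubmodule_injective ·) }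

variable [TopologicalSpace F] [TopologicalSpace Wsp]

theorem comp {ω : Representation ℂ J V} (hω : IsSmoothOscillatorRep ι ψ ω) (hι : Continuous ι) :
    IsSmoothOscillatorRep (MonoidHom.id (Heisenberg B)) ψ (ω.comp ι) :=
  ⟨fun v ↦ (hω.1 v).preimage hι, hω.2⟩

theorem isOpen_setOf_centralChar_eq_one {ω : Representation ℂ J V}
    (hω : IsSmoothOscillatorRep ι ψ ω) (hι : Continuous ι) : IsOpen {z | ψ z = 1} := by
  obtain ⟨hsmooth, ⟨v, hv⟩, -, hz⟩ := hω
  have hcont : Continuous fun z : F ↦ (⟨0, z⟩ : Heisenberg B) :=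
    continuous_induced_rng.2 (continuous_const.prodMk continuous_id)
  convert (hsmooth v).preimage (hι.comp hcont) using 1
  ext z
  refine ⟨fun h ↦ (hz z v).trans (by rw [h, one_smul]), fun h ↦ ?_⟩
  exact smul_left_injective ℂ hv (((hz z v).symm.trans h).trans (one_smul ℂ v).symm)

theorem eventually_apply_mk_zero {ω : Representation ℂ J V}
    (hω : IsSmoothOscillatorRep ι ψ ω) (hι : Continuous ι) (v : V) :
    ∀ᶠ w in 𝓝 (0 : Wsp), ω (ι ⟨w, 0⟩) v = v := by
  have hcont : Continuous fun w : Wsp ↦ (⟨w, 0⟩ : Heisenberg B) :=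
    continuous_induced_rng.2 (continuous_id.prodMk continuous_const)
  exact ((hω.1 v).preimage (hι.comp hcont)).mem_nhds (by simp [hω.2.2.2])

end IsSmoothOscillatorRep

section StoneVonNeumann

open Representation

variable {F Wsp : Type} [Field F] [TopologicalSpace F] [IsTopologicalRing F]
  [LocallyCompactSpace F] [TotallyDisconnectedSpace F] [T2Space F] [AddCommGroup Wsp] [Module F Wsp]
  [FiniteDimensional F Wsp] [TopologicalSpace Wsp] [ContinuousAdd Wsp] [ContinuousSMul F Wsp]
  {B : Wsp →ₗ[F] Wsp →ₗ[F] F}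

theorem Heisenberg.exists_subgroup {A : Type*} [Field A] {ψ : AddChar F A}
    (hF : ¬ DiscreteTopology F) (hψ : IsOpen {z | ψ z = 1}) (hψ1 : ψ ≠ 1)
    (hB : (B - B.flip).SeparatingRight) {U : Set Wsp} (hU : U ∈ 𝓝 0) :
    ∃ L : AddSubgroup Wsp, (L : Set Wsp) ⊆ U ∧
      pairingDual (commutatorPairing B ψ) (pairingDual (commutatorPairing B ψ) (preimage B L)) =
        preimage B L ∧
      (preimage B L).relIndex (pairingDual (commutatorPairing B ψ) (preimage B L)) ≠ 0 := by
  have hβ (x y : Wsp) (h : ψ ((B - B.flip) x y) = 1) : ψ ((B - B.flip) y x) = 1 := by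
    have hneg : (B - B.flip) y x = -(B - B.flip) x y := by simp
    rw [hneg, AddChar.map_neg_eq_inv, h, inv_one]
  obtain ⟨L, hLU, hLL, hidx⟩ := exists_charDual_lattice hF hψ hψ1 hB hβ hU
  refine ⟨L, hLU, ?_, ?_⟩
  · rw [pairingDual_preimage, pairingDual_preimage, hLL]
  · rwa [pairingDual_preimage, relIndex_preimage]

variable {ψ : AddChar F ℂ} {V V' : Type} [AddCommGroup V] [Module ℂ V]
  [AddCommGroup V'] [Module ℂ V'] {ρ : Representation ℂ (Heisenberg B) V}
  {σ : Representation ℂ (Heisenberg B) V'}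

theorem IsSmoothOscillatorRep.exists_forall_apply_eq_smul
    (hF : ¬ DiscreteTopology F) (hψ1 : ψ ≠ 1) (hB : (B - B.flip).SeparatingRight)
    (hρ : IsSmoothOscillatorRep (MonoidHom.id (Heisenberg B)) ψ ρ) (f : IntertwiningMap ρ ρ) :
    ∃ a : ℂ, ∀ v, f v = a • v := by
  have : IsIrreducible ρ := hρ.isIrreducible
  obtain ⟨v, hv0⟩ := hρ.2.1
  obtain ⟨L, hL, -, hidx⟩ := Heisenberg.exists_subgroup hF
    (hρ.isOpen_setOf_centralChar_eq_one continuous_id) hψ1 hB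
    (hρ.eventually_apply_mk_zero continuous_id v)
  have hv := Heisenberg.mem_jointEigenspace_preimage hρ.2.2.2 hL
  exact (Heisenberg.commutesUpTo hρ.2.2.2).exists_forall_apply_eq_smul hidx hv hv0 f

theorem IsSmoothOscillatorRep.nonempty_equiv (hF : ¬ DiscreteTopology F) (hψ1 : ψ ≠ 1)
    (hB : (B - B.flip).SeparatingRight)
    (hρ : IsSmoothOscillatorRep (MonoidHom.id (Heisenberg B)) ψ ρ)
    (hσ : IsSmoothOscillatorRep (MonoidHom.id (Heisenberg B)) ψ σ) : Nonempty (ρ.Equiv σ) := by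
  have : IsIrreducible ρ := hρ.isIrreducible
  have : IsIrreducible σ := hσ.isIrreducible
  obtain ⟨v, hv0⟩ := hρ.2.1
  obtain ⟨v', hv0'⟩ := hσ.2.1
  obtain ⟨L, hL, hLL, hidx⟩ := Heisenberg.exists_subgroup hF
    (hρ.isOpen_setOf_centralChar_eq_one continuous_id) hψ1 hB
    ((hρ.eventually_apply_mk_zero continuous_id v).and
      (hσ.eventually_apply_mk_zero continuous_id v'))
  have hv := Heisenberg.mem_jointEigenspace_preimage hρ.2.2.2 fun l hl ↦ (hL hl).1
  have hv' := Heisenberg.mem_jointEigenspace_preimage hσ.2.2.2 fun l hl ↦ (hL hl).2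
  exact (Heisenberg.commutesUpTo hρ.2.2.2).nonempty_equiv (Heisenberg.commutesUpTo hσ.2.2.2) hLL
    (Nat.cast_ne_zero.2 hidx) hv hv0 hv' hv0'

end StoneVonNeumann

section Twist

variable {k H J V V' : Type*} [Field k] [Group H] [Group J] [AddCommGroup V] [Module k V]
  [AddCommGroup V'] [Module k V'] {ι : H →* J} {ω : Representation k J V}
  {ω' : Representation k J V'}

/-- `e` is an isomorphism of representations from `χ ⊗ ω` to `ω'`, where `χ ⊗ ω` is realized on
the space of `ω`. -/
def IsTwistEquiv (χ : J →* kˣ) (ω : Representation k J V) (ω' : Representation k J V')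
    (e : V ≃ₗ[k] V') : Prop :=
  ∀ g v, e ((χ g : k) • ω g v) = ω' g (e v)

theorem exists_apply_smul_eq (hι : ι.range.Normal)
    (hω : ∀ f : V →ₗ[k] V, (∀ h v, f (ω (ι h) v) = ω (ι h) (f v)) → ∃ a : k, ∀ v, f v = a • v)
    {e : V ≃ₗ[k] V'} (he : ∀ h v, e (ω (ι h) v) = ω' (ι h) (e v)) (g : J) :
    ∃ a : k, ∀ v, e (a • ω g v) = ω' g (e v) := by
  obtain ⟨a, ha⟩ := hω (e.symm ∘ₗ ω' g ∘ₗ e ∘ₗ ω g⁻¹) fun h v ↦ by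
    obtain ⟨h', hh'⟩ := hι.conj_mem (ι h) ⟨h, rfl⟩ g⁻¹
    have hconj : ι h * g = g * ι h' := by rw [hh']; group
    have hconj' : g⁻¹ * ι h = ι h' * g⁻¹ := by rw [hh']; group
    calc
      e.symm (ω' g (e (ω g⁻¹ (ω (ι h) v)))) = e.symm (ω' g (e (ω (ι h') (ω g⁻¹ v)))) := by
        rw [← Module.End.mul_apply, ← map_mul, hconj', map_mul, Module.End.mul_apply]
      _ = e.symm (ω' (ι h) (ω' g (e (ω g⁻¹ v)))) := by
        rw [he, ← Module.End.mul_apply, ← map_mul, ← hconj, map_mul, Module.End.mul_apply]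
      _ = ω (ι h) (e.symm (ω' g (e (ω g⁻¹ v)))) := by
        rw [LinearEquiv.symm_apply_eq, he, LinearEquiv.apply_symm_apply]
  refine ⟨a, fun v ↦ ?_⟩
  rw [← ha (ω g v)]
  simp

theorem exists_isTwistEquiv [Nontrivial V] (hι : ι.range.Normal)
    (hω : ∀ f : V →ₗ[k] V, (∀ h v, f (ω (ι h) v) = ω (ι h) (f v)) → ∃ a : k, ∀ v, f v = a • v)
    {e : V ≃ₗ[k] V'} (he : ∀ h v, e (ω (ι h) v) = ω' (ι h) (e v)) :
    ∃ χ : J →* kˣ, (∀ h, χ (ι h) = 1) ∧ IsTwistEquiv χ ω ω' e := by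
  obtain ⟨v, hv⟩ := exists_ne (0 : V)
  choose c hc using exists_apply_smul_eq hι hω he
  have hc_unique {g : J} {a : k} (h : e (a • ω g v) = ω' g (e v)) : c g = a :=
    smul_left_injective k ((ω.apply_bijective g).1.ne_iff' (map_zero _) |>.2 hv)
      (e.injective ((hc g v).trans h.symm))
  let χ : J →* k :=
    { toFun := c
      map_one' := hc_unique (by simp)
      map_mul' g g' := hc_unique <| by
        rw [map_mul, map_mul, Module.End.mul_apply, Module.End.mul_apply, ← hc g', ← hc g,
          map_smul (ω g), smul_smul] }
  exact ⟨χ.toHomUnits, fun h ↦ Units.ext (hc_unique (by rw [Units.val_one, one_smul, he])), hc⟩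

namespace IsTwistEquiv

variable {χ χ' : J →* kˣ} {e e' : V ≃ₗ[k] V'}

theorem apply_comp (h : IsTwistEquiv χ ω ω' e) (hχ : ∀ x, χ (ι x) = 1) (x : H) (v : V) :
    e (ω (ι x) v) = ω' (ι x) (e v) := by
  rw [← h, hχ, Units.val_one, one_smul]

theorem eq [Nontrivial V]
    (hω : ∀ f : V →ₗ[k] V, (∀ h v, f (ω (ι h) v) = ω (ι h) (f v)) → ∃ a : k, ∀ v, f v = a • v)
    (h : IsTwistEquiv χ ω ω' e) (hχ : ∀ x, χ (ι x) = 1)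
    (h' : IsTwistEquiv χ' ω ω' e') (hχ' : ∀ x, χ' (ι x) = 1) : χ = χ' := by
  obtain ⟨v, hv⟩ := exists_ne (0 : V)
  obtain ⟨a, ha⟩ := hω (e.trans e'.symm).toLinearMap fun x v ↦ by
    simp [h.apply_comp hχ, LinearEquiv.symm_apply_eq, h'.apply_comp hχ']
  have hae (v : V) : e v = a • e' v := by
    rw [← map_smul, ← ha]
    simp
  ext g
  have hgv : e (ω g v) ≠ 0 := by simpa using (ω.apply_bijective g).1.ne hv
  refine smul_left_injective k hgv ?_
  calc
    (χ g : k) • e (ω g v) = a • ω' g (e' v) := by rw [← map_smul, h, hae, map_smul]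
    _ = (χ' g : k) • e (ω g v) := by rw [← h', hae, map_smul, smul_comm]

theorem continuous [TopologicalSpace J] [IsTopologicalGroup J] [TopologicalSpace k]
    [ContinuousMul k] (h : IsTwistEquiv χ ω ω' e) {v : V} (hv : v ≠ 0)
    (hω : ∀ᶠ g in 𝓝 1, ω g v = v) (hω' : ∀ᶠ g in 𝓝 1, ω' g (e v) = e v) : Continuous χ := by
  have hχ : ∀ᶠ g in 𝓝 1, χ g = 1 := by
    filter_upwards [hω, hω'] with g hg hg'
    refine Units.ext (smul_left_injective k hv (e.injective ?_))
    have := h g v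
    rw [hg, hg'] at this
    simpa using this
  exact continuous_of_continuousAt_one χ <|
    continuousAt_const.congr (hχ.mono fun g hg ↦ hg.symm)

end IsTwistEquiv

end Twist

theorem separatingRight_sub_flip {R M : Type*} [CommRing R] [IsAddTorsionFree R] [AddCommGroup M]
    [Module R M] {B : M →ₗ[R] M →ₗ[R] R} (hB : B.IsAlt) (h : B.SeparatingLeft) :
    (B - B.flip).SeparatingRight := by
  refine fun y hy ↦ h y fun x ↦ ?_
  have hxy := hy x
  rw [LinearMap.sub_apply, LinearMap.sub_apply, LinearMap.flip_apply, ← hB.neg] at hxy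
  exact self_eq_neg.1 (sub_eq_zero.1 hxy).symm

theorem oscillator_rep_unique_up_to_character_twist_general
    {F : Type} [Field F] [TopologicalSpace F] [IsTopologicalRing F] [LocallyCompactSpace F]
    [TotallyDisconnectedSpace F] [T2Space F] (hF : ¬ DiscreteTopology F) {ψ : AddChar F ℂ}
    (hψ : ψ ≠ 1) {Wsp : Type} [AddCommGroup Wsp] [Module F Wsp] [FiniteDimensional F Wsp]
    [TopologicalSpace Wsp] [ContinuousAdd Wsp] [ContinuousSMul F Wsp] {B : Wsp →ₗ[F] Wsp →ₗ[F] F}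
    (hB : (B - B.flip).SeparatingRight) {J : Type} [Group J] [TopologicalSpace J]
    [IsTopologicalGroup J] {ι : Heisenberg B →* J} (hι : Continuous ι) (hι_normal : ι.range.Normal)
    {V V' : Type} [AddCommGroup V] [Module ℂ V] [AddCommGroup V'] [Module ℂ V']
    {ω : Representation ℂ J V} {ω' : Representation ℂ J V'}
    (hω : IsSmoothOscillatorRep ι ψ ω) (hω' : IsSmoothOscillatorRep ι ψ ω') :
    ∃! χ : J →* ℂˣ, Continuous χ ∧ (∀ h : Heisenberg B, χ (ι h) = 1) ∧
      ∃ e : V ≃ₗ[ℂ] V', ∀ (g : J) (v : V), e ((χ g : ℂ) • ω g v) = ω' g (e v) := by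
  obtain ⟨v, hv⟩ := hω.2.1
  have : Nontrivial V := nontrivial_of_ne v 0 hv
  have hschur (f : V →ₗ[ℂ] V) (hf : ∀ h v, f (ω (ι h) v) = ω (ι h) (f v)) :
      ∃ a : ℂ, ∀ v, f v = a • v :=
    (hω.comp hι).exists_forall_apply_eq_smul hF hψ hB ⟨f, fun h ↦ LinearMap.ext (hf h)⟩
  obtain ⟨e⟩ := (hω.comp hι).nonempty_equiv hF hψ hB (hω'.comp hι)
  obtain ⟨χ, hχ, he⟩ := exists_isTwistEquiv (ω' := ω') (e := e.toLinearEquiv) hι_normal hschur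
    fun h v ↦ LinearMap.congr_fun (e.isIntertwining' h) v
  refine ⟨χ, ⟨he.continuous hv ((hω.1 v).mem_nhds ?_) ((hω'.1 _).mem_nhds ?_), hχ, _, he⟩, ?_⟩
  · simp
  · simp
  · rintro χ' ⟨-, hχ', e', he'⟩
    exact IsTwistEquiv.eq hschur he' hχ' he hχ

/-- **Smooth oscillator representations are unique up to twisting by characters.**
For any two smooth oscillator representations `ω` and `ω'` of `J` associated to
`ψ`, there exists a unique character `χ` of `J` which is trivial on `H(W)` such
that `ω' ≅ χ ⊗ ω`. -/
theorem oscillator_rep_unique_up_to_character_twist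
    -- `F` : a non-archimedean local field of characteristic zero
    (F : Type) [Field F] [CharZero F] [TopologicalSpace F] [IsTopologicalRing F]
    [LocallyCompactSpace F] [TotallyDisconnectedSpace F] [T2Space F]
    (hF : ¬ DiscreteTopology F)
    -- a fixed nontrivial unitary character `ψ` of `F`
    (ψ : AddChar F ℂ) (hψ_unitary : ∀ z : F, ‖ψ z‖ = 1) (hψ_ne : ∃ z : F, ψ z ≠ 1)
    -- `W` : a finite-dimensional symplectic `F`-space
    (Wsp : Type) [AddCommGroup Wsp] [Module F Wsp] [FiniteDimensional F Wsp]
    [TopologicalSpace Wsp] [IsTopologicalAddGroup Wsp] [ContinuousSMul F Wsp]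
    (B : Wsp →ₗ[F] Wsp →ₗ[F] F)
    (halt : ∀ w : Wsp, B w w = 0)
    (hnondeg : ∀ w : Wsp, (∀ w' : Wsp, B w w' = 0) → w = 0)
    -- `J` : a totally disconnected, locally compact, Hausdorff topological group
    (J : Type) [Group J] [TopologicalSpace J] [IsTopologicalGroup J]
    [LocallyCompactSpace J] [TotallyDisconnectedSpace J] [T2Space J]
    -- containing `H(W)` as a closed normal subgroup
    (ι : Heisenberg B →* J) (hι_inj : Function.Injective ι)
    (hι_cont : Continuous ι) (hι_closed : IsClosed (Set.range ι))
    (hι_normal : (ι.range).Normal)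
    -- two smooth oscillator representations of `J` associated to `ψ`
    (V V' : Type) [AddCommGroup V] [Module ℂ V] [AddCommGroup V'] [Module ℂ V']
    (ω : Representation ℂ J V) (ω' : Representation ℂ J V')
    (hω : IsSmoothOscillatorRep ι ψ ω) (hω' : IsSmoothOscillatorRep ι ψ ω') :
    ∃! χ : J →* ℂˣ, Continuous χ ∧ (∀ h : Heisenberg B, χ (ι h) = 1) ∧
      ∃ e : V ≃ₗ[ℂ] V', ∀ (g : J) (v : V), e ((χ g : ℂ) • ω g v) = ω' g (e v) :=
  oscillator_rep_unique_up_to_character_twist_general hF (AddChar.ne_one_iff.2 hψ_ne)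
    (separatingRight_sub_flip halt hnondeg) hι_cont hι_normal hω hω'
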